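/- Let S_1, ..., S_n be nonempty compact convex subsets of Euclidean spaces, S their product, and for each player i let v_i(x_i, x_{-i}) be continuous and concave in x_i, and h_{ik}(x_i, x_{-i}) (k = 1..d_i) be continuous and convex in x_i. Suppose each player i has a default action x_i^0 ∈ S_i with h_{ik}(x_i^0, x_{-i}) < 0 for all k and all x_{-i} ∈ S_{-i}. Then there exists x* ∈ S such that for every i, x*_i maximizes v_i(·, x*_{-i}) over { x_i ∈ S_i : h_{ik}(x_i, x*_{-i}) ≤ 0 for all k } (i.e., an equilibrium of the concave game with externality constraints exists). -/

import Mathlib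

open Set Metric MeasureTheory Polynomial in
/-- The determinant of `1 + A` is a fixed linear combination, with total weight one, of the
determinants of `1 + t • A` for finitely many `t` in any prescribed interval `(0, ε)`. -/
theorem exists_det_one_add_eq_sum {E : Type*} [NormedAddCommGroup E] [NormedSpace ℝ E]
    [FiniteDimensional ℝ E] {ε : ℝ} (hε : 0 < ε) :
    ∃ (s : Finset ℝ) (w : ℝ → ℝ), (∀ t ∈ s, t ∈ Ioo 0 ε) ∧ ∑ t ∈ s, w t = 1 ∧
      ∀ A : E →L[ℝ] E, (1 + A).det = ∑ t ∈ s, w t * (1 + t • A).det := by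
  classical
  obtain ⟨s, hs, hcard⟩ := (Ioo_infinite hε).exists_subset_card_eq (Module.finrank ℝ E + 1)
  have key : ∀ A : E →L[ℝ] E,
      (1 + A).det = ∑ t ∈ s, (Lagrange.basis s id t).eval 1 * (1 + t • A).det := by
    intro A
    let b := Module.finBasis ℝ E
    let M := LinearMap.toMatrix b b (A : E →ₗ[ℝ] E)
    let p : ℝ[X] := Matrix.det ((X : ℝ[X]) • M.map C + (1 : Matrix _ _ ℝ).map C)
    have hp : ∀ t : ℝ, p.eval t = (1 + t • A).det := by
      intro t
      have h1 : p.eval t = Matrix.det (t • M + 1) := by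
        change evalRingHom t p = _
        rw [RingHom.map_det]
        congr 1
        ext i j
        rcases eq_or_ne i j with rfl | hij
        · simp; ring
        · simp [hij]; ring
      rw [h1, ContinuousLinearMap.det, ← LinearMap.det_toMatrix b]
      congr 1
      simp [M, add_comm]
    have hdeg : p.degree < (s.card : WithBot ℕ) := by
      refine lt_of_le_of_lt degree_le_natDegree ?_
      have := natDegree_det_X_add_C_le M 1
      rw [Fintype.card_fin] at this
      rw [hcard]
      exact_mod_cast Nat.lt_succ_of_le this
    have hi := Lagrange.eq_interpolate (v := id) (s := s) (fun _ _ _ _ h => h) hdeg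
    have h1 := hp 1
    rw [hi, Lagrange.interpolate_apply, eval_finsetSum] at h1
    simp only [eval_mul, eval_C, id, hp, one_smul] at h1
    rw [← h1]
    exact Finset.sum_congr rfl fun t _ => mul_comm _ _
  refine ⟨s, fun t => (Lagrange.basis s id t).eval 1, fun t ht => hs ht, ?_, key⟩
  have h0 := key 0
  have h1 : (1 : E →L[ℝ] E).det = 1 := by simp [ContinuousLinearMap.det]
  simpa [h1] using h0.symm

open Set Metric in
/-- A `C¹` map vanishing on a sphere, extended by zero outside the ball, is Lipschitz. -/
theorem exists_lipschitzWith_indicator_ball {E : Type*} [NormedAddCommGroup E]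
    [NormedSpace ℝ E] [FiniteDimensional ℝ E] {g : E → E} (hg : ContDiff ℝ 1 g) {R : ℝ}
    (hR : 0 < R) (hgR : ∀ x, ‖x‖ = R → g x = 0) :
    ∃ C, LipschitzWith C ((ball 0 R).indicator g) := by
  have := FiniteDimensional.proper ℝ E
  obtain ⟨C, hC⟩ := hg.contDiffOn.exists_lipschitzOnWith (s := closedBall 0 R) one_ne_zero
    (convex_closedBall _ _) (isCompact_closedBall _ _)
  rcases subsingleton_or_nontrivial E with hE | hE
  · exact ⟨0, LipschitzWith.of_dist_le_mul fun x y => by simp [Subsingleton.elim x y]⟩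
  have key : ∀ x y : E, ‖x‖ < R → R ≤ ‖y‖ → ‖g x‖ ≤ C * ‖x - y‖ := by
    intro x y hx hy
    obtain ⟨z, hz, hxz⟩ : ∃ z : E, ‖z‖ = R ∧ ‖x - z‖ ≤ R - ‖x‖ := by
      rcases eq_or_ne x 0 with rfl | hx0
      · obtain ⟨z, hz⟩ := exists_norm_eq E hR.le
        exact ⟨z, hz, by simp [hz]⟩
      · have hxp : 0 < ‖x‖ := norm_pos_iff.2 hx0
        refine ⟨(R / ‖x‖) • x, ?_, ?_⟩
        · rw [norm_smul, Real.norm_of_nonneg (by positivity)]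
          field_simp
        · have : x - (R / ‖x‖) • x = -((R / ‖x‖ - 1) • x) := by module
          rw [this, norm_neg, norm_smul, Real.norm_of_nonneg]
          · apply le_of_eq
            field_simp
          · rw [sub_nonneg, one_le_div hxp]
            exact hx.le
    have h1 := hC.dist_le_mul x (by simpa using hx.le) z (by simp [hz])
    rw [dist_eq_norm, dist_eq_norm, hgR z hz, sub_zero] at h1
    refine h1.trans (mul_le_mul_of_nonneg_left ?_ C.2)
    have := norm_sub_norm_le y x
    rw [norm_sub_rev y x] at this
    linarith
  refine ⟨C, LipschitzWith.of_dist_le_mul fun x y => ?_⟩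
  rw [dist_eq_norm, dist_eq_norm]
  by_cases hx : ‖x‖ < R <;> by_cases hy : ‖y‖ < R
  · simpa [indicator, hx, hy, dist_eq_norm] using
      hC.dist_le_mul x (by simpa using hx.le) y (by simpa using hy.le)
  · simpa [indicator, hx, hy] using key x y hx (not_lt.1 hy)
  · simpa [indicator, hx, hy, norm_sub_rev] using key y x hy (not_lt.1 hx)
  · simp only [indicator, mem_ball_zero_iff, hx, hy, if_false, sub_zero, norm_zero]
    positivity

open Set Metric MeasureTheory in
/-- Small perturbations of the identity supported in a ball preserve the volume of the ball. -/
theorem exists_integral_det_one_add_smul_fderiv_eq {E : Type*} [NormedAddCommGroup E]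
    [NormedSpace ℝ E] [FiniteDimensional ℝ E] [MeasurableSpace E] [BorelSpace E]
    (μ : Measure E) [μ.IsAddHaarMeasure] {g : E → E} (hg : ContDiff ℝ 1 g) {R : ℝ}
    (hR : 0 < R) (hgR : ∀ x, ‖x‖ = R → g x = 0) :
    ∃ ε > 0, ∀ t ∈ Ioo (0 : ℝ) ε,
      ∫ x in ball 0 R, (1 + t • fderiv ℝ g x).det ∂μ = μ.real (ball 0 R) := by
  have := FiniteDimensional.proper ℝ E
  obtain ⟨C, hC⟩ := exists_lipschitzWith_indicator_ball hg hR hgR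
  have hdet : Continuous fun A : E →L[ℝ] E => A.det := ContinuousLinearMap.continuous_det
  have h1 : (1 : E →L[ℝ] E).det = 1 := by simp [ContinuousLinearMap.det]
  obtain ⟨δ, hδ, hδdet⟩ : ∃ δ > 0, ∀ A : E →L[ℝ] E, ‖A‖ < δ → 0 < (1 + A).det := by
    have hc : ContinuousAt (fun A : E →L[ℝ] E => (1 + A).det) 0 := by
      exact (hdet.comp (continuous_const.add continuous_id)).continuousAt
    have := hc.eventually (lt_mem_nhds (a := 0) (by simp [h1]))
    obtain ⟨δ, hδ, H⟩ := Metric.eventually_nhds_iff.1 this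
    exact ⟨δ, hδ, fun A hA => H (by simpa using hA)⟩
  have hfd : Continuous (fderiv ℝ g) := hg.continuous_fderiv one_ne_zero
  obtain ⟨D, hD⟩ := (isCompact_closedBall (0 : E) R).exists_bound_of_continuousOn
    hfd.continuousOn
  have hD0 : 0 ≤ D := (norm_nonneg _).trans (hD 0 (by simpa using hR.le))
  refine ⟨min (1 / (C + 1)) (δ / (D + 1)), by positivity, fun t ⟨ht0, ht⟩ => ?_⟩
  have htC : t * C < 1 := by
    have := ht.trans_le (min_le_left _ _)
    rw [lt_div_iff₀ (by positivity)] at this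
    nlinarith
  have htD : t * D < δ := by
    have := ht.trans_le (min_le_right _ _)
    rw [lt_div_iff₀ (by positivity)] at this
    nlinarith
  let G := (ball (0 : E) R).indicator g
  let F : E → E := fun x => x + t • G x
  have hF : ApproximatesLinearOn F ((ContinuousLinearEquiv.refl ℝ E : E ≃L[ℝ] E) : E →L[ℝ] E)
      univ (t.toNNReal * C) := by
    intro x _ y _
    have := hC.dist_le_mul x y
    rw [dist_eq_norm, dist_eq_norm] at this
    have e : F x - F y - ((ContinuousLinearEquiv.refl ℝ E : E ≃L[ℝ] E) : E →L[ℝ] E) (x - y)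
        = t • (G x - G y) := by
      simp only [F, ContinuousLinearEquiv.coe_refl, ContinuousLinearMap.coe_id', id]
      module
    rw [e, norm_smul, Real.norm_of_nonneg ht0.le]
    calc t * ‖G x - G y‖ ≤ t * (C * ‖x - y‖) := by gcongr
      _ = _ := by simp [mul_assoc, ht0.le]
  have hc : Subsingleton E ∨ (t.toNNReal * C : NNReal) <
      ‖((ContinuousLinearEquiv.refl ℝ E).symm : E →L[ℝ] E)‖₊⁻¹ := by
    rcases subsingleton_or_nontrivial E with hE | hE
    · exact Or.inl hE
    · right
      have : ‖((ContinuousLinearEquiv.refl ℝ E).symm : E →L[ℝ] E)‖₊ = 1 := by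
        ext
        simp
      rw [this, inv_one, ← NNReal.coe_lt_coe]
      simpa [ht0.le] using htC
  have hinj : Function.Injective F := (hF.toHomeomorph F hc).injective
  have hsurj : Function.Surjective F := (hF.toHomeomorph F hc).surjective
  have hFout : ∀ x, x ∉ ball (0 : E) R → F x = x := fun x hx => by simp [F, G, hx]
  have himg : F '' ball 0 R = ball 0 R := by
    ext y
    constructor
    · rintro ⟨x, hx, rfl⟩
      by_contra hy
      rw [hinj (hFout _ hy)] at hy
      exact hy hx
    · intro hy
      obtain ⟨x, rfl⟩ := hsurj y
      refine ⟨x, ?_, rfl⟩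
      by_contra hx
      rw [hFout x hx] at hy
      exact hx hy
  have hder : ∀ x ∈ ball (0 : E) R,
      HasFDerivWithinAt F (1 + t • fderiv ℝ g x) (ball 0 R) x := by
    intro x hx
    have hgx : HasFDerivAt g (fderiv ℝ g x) x := (hg.differentiable one_ne_zero x).hasFDerivAt
    have : HasFDerivAt (fun x => x + t • g x) (1 + t • fderiv ℝ g x) x :=
      (hasFDerivAt_id x).add (hgx.const_smul t)
    exact this.hasFDerivWithinAt.congr (fun y hy => by simp [F, G, indicator_of_mem hy])
      (by simp [F, G, indicator_of_mem hx])
  have hint := integral_image_eq_integral_abs_det_fderiv_smul μ measurableSet_ball hder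
    hinj.injOn (fun _ => (1 : ℝ))
  rw [himg] at hint
  simp only [integral_const, smul_eq_mul, mul_one, measureReal_restrict_apply_univ] at hint
  rw [hint]
  refine setIntegral_congr_fun measurableSet_ball fun x hx => ?_
  refine (abs_of_pos (hδdet _ ?_)).symm
  rw [norm_smul, Real.norm_of_nonneg ht0.le]
  exact lt_of_le_of_lt (mul_le_mul_of_nonneg_left (hD x (ball_subset_closedBall hx)) ht0.le) htD

open Set Metric MeasureTheory in
/-- There is no `C¹` retraction of a ball onto its boundary sphere. -/
theorem not_exists_contDiff_retraction_sphere {E : Type*} [NormedAddCommGroup E]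
    [InnerProductSpace ℝ E] [FiniteDimensional ℝ E] {r : E → E} (hr : ContDiff ℝ 1 r) {R : ℝ}
    (hR : 0 < R) (hnorm : ∀ x, ‖r x‖ = R) : ¬ ∀ x, ‖x‖ = R → r x = x := by
  intro hid
  borelize E
  have := FiniteDimensional.proper ℝ E
  let μ : Measure E := Measure.addHaar
  let g : E → E := fun x => r x - x
  have hg : ContDiff ℝ 1 g := hr.sub contDiff_id
  obtain ⟨ε, hε, H⟩ := exists_integral_det_one_add_smul_fderiv_eq μ hg hR
    (fun x hx => sub_eq_zero.2 (hid x hx))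
  obtain ⟨s, w, hs, hw, hdet⟩ := exists_det_one_add_eq_sum (E := E) hε
  have hdc : Continuous fun A : E →L[ℝ] E => A.det := ContinuousLinearMap.continuous_det
  have hfd : Continuous (fderiv ℝ g) := hg.continuous_fderiv one_ne_zero
  have hint : ∀ t : ℝ, IntegrableOn (fun x => (1 + t • fderiv ℝ g x).det) (ball 0 R) μ := by
    intro t
    refine IntegrableOn.mono_set ?_ (ball_subset_closedBall (x := (0 : E)))
    exact (hdc.comp (continuous_const.add (hfd.const_smul t))).continuousOn.integrableOn_compact
      (isCompact_closedBall _ _)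
  have hvol : ∫ x in ball 0 R, (1 + fderiv ℝ g x).det ∂μ = μ.real (ball 0 R) := by
    rw [integral_congr_ae (Filter.Eventually.of_forall fun x => hdet (fderiv ℝ g x))]
    rw [integral_finsetSum _ fun t _ => (hint t).const_mul _]
    simp_rw [integral_const_mul]
    rw [Finset.sum_congr rfl fun t ht => by rw [H t (hs t ht)], ← Finset.sum_mul, hw, one_mul]
  have hzero : ∀ x, (1 + fderiv ℝ g x).det = 0 := by
    intro x
    have hrx : HasFDerivAt r (fderiv ℝ r x) x := (hr.differentiable one_ne_zero x).hasFDerivAt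
    have hgx : fderiv ℝ g x = fderiv ℝ r x - 1 := (hrx.sub (hasFDerivAt_id x)).fderiv
    rw [hgx, add_sub_cancel]
    by_contra hne
    have hsurj : Function.Surjective (fderiv ℝ r x) := by
      exact (LinearMap.equivOfDetNeZero (fderiv ℝ r x : E →ₗ[ℝ] E) hne).surjective
    obtain ⟨u, hu⟩ := hsurj (r x)
    have h1 := hrx.norm_sq
    have h2 : (fun y => ‖r y‖ ^ 2) = fun _ => R ^ 2 := by
      funext y
      rw [hnorm]
    rw [h2] at h1
    have h3 := congrArg (fun L : E →L[ℝ] ℝ => L u) (h1.unique (hasFDerivAt_const _ _))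
    simp [hu, hnorm, hR.ne'] at h3
  have hpos : 0 < μ.real (ball (0 : E) R) :=
    ENNReal.toReal_pos (measure_ball_pos μ 0 hR).ne' measure_ball_lt_top.ne
  rw [integral_congr_ae (Filter.Eventually.of_forall hzero), integral_zero] at hvol
  exact hpos.ne hvol

/-- A `C¹` map vanishing outside a ball has a fixed point. -/
theorem exists_isFixedPt_of_contDiff {E : Type*} [NormedAddCommGroup E]
    [InnerProductSpace ℝ E] [FiniteDimensional ℝ E] {f : E → E} (hf : ContDiff ℝ 1 f) {R : ℝ}
    (hR : 0 < R) (hfR : ∀ x, R ≤ ‖x‖ → f x = 0) : ∃ x, f x = x := by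
  by_contra! hne
  have hne' : ∀ x, x - f x ≠ 0 := fun x hx => hne x (sub_eq_zero.1 hx).symm
  have hF : ContDiff ℝ 1 fun x => x - f x := contDiff_id.sub hf
  refine not_exists_contDiff_retraction_sphere
    (r := fun x => (R * ‖x - f x‖⁻¹) • (x - f x)) ?_ hR ?_ ?_
  · exact (contDiff_const.mul ((hF.norm ℝ hne').inv fun x => norm_ne_zero_iff.2 (hne' x))).smul hF
  · intro x
    rw [norm_smul, norm_mul, norm_inv, norm_norm, mul_assoc,
      inv_mul_cancel₀ (norm_ne_zero_iff.2 (hne' x)), mul_one, Real.norm_of_nonneg hR.le]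
  · intro x hx
    simp [hfR x hx.ge, hx, hR.ne']

open Metric in
/-- A bounded continuous self-map of a Euclidean space has a fixed point. -/
theorem exists_isFixedPt_of_bounded {E : Type*} [NormedAddCommGroup E]
    [InnerProductSpace ℝ E] [FiniteDimensional ℝ E] {f : E → E} (hf : Continuous f) {R : ℝ}
    (hfR : ∀ x, ‖f x‖ ≤ R) : ∃ x, f x = x := by
  have := FiniteDimensional.proper ℝ E
  have hR : 0 ≤ R := (norm_nonneg _).trans (hfR 0)
  have approx : ∀ ε : ℝ, 0 < ε → ε ≤ 1 → ∃ x, ‖x‖ ≤ R + 1 ∧ ‖x - f x‖ ≤ ε := by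
    intro ε hε hε1
    let χ : E → ℝ := fun x => max 0 (min 1 (R + 2 - ‖x‖))
    have hχc : Continuous χ := by fun_prop
    have hχ0 : ∀ x, 0 ≤ χ x := fun x => le_max_left _ _
    have hχ1 : ∀ x, χ x ≤ 1 := fun x => max_le zero_le_one (min_le_left _ _)
    obtain ⟨g, hg, hgf, hgs⟩ := (hχc.smul hf).exists_contDiff_approx 1
      (continuous_const (y := ε)) (fun _ => hε)
    obtain ⟨x, hx⟩ := exists_isFixedPt_of_contDiff hg (R := R + 2) (by positivity) (by
      intro x hx
      by_contra h
      refine hgs h ?_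
      have : χ x = 0 := max_eq_left ((min_le_right _ _).trans (by linarith))
      simp [this])
    have hd : ‖x - χ x • f x‖ < ε := by
      have := hgf x
      rwa [hx, dist_eq_norm] at this
    have hxR : ‖x‖ ≤ R + 1 := by
      have h1 : ‖χ x • f x‖ ≤ R := by
        rw [norm_smul, Real.norm_of_nonneg (hχ0 x)]
        exact (mul_le_of_le_one_left (norm_nonneg _) (hχ1 x)).trans (hfR x)
      have h2 := norm_sub_norm_le x (χ x • f x)
      linarith
    have hone : χ x = 1 := by
      simp only [χ]
      rw [min_eq_left (by linarith), max_eq_right zero_le_one]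
    rw [hone, one_smul] at hd
    exact ⟨x, hxR, hd.le⟩
  obtain ⟨x, -, hmin⟩ := (isCompact_closedBall (0 : E) (R + 1)).exists_isMinOn
    ⟨0, by simp; positivity⟩ (f := fun x => ‖x - f x‖) (by fun_prop)
  refine ⟨x, ?_⟩
  by_contra hne
  have hpos : 0 < ‖x - f x‖ := norm_pos_iff.2 (sub_ne_zero.2 (Ne.symm hne))
  obtain ⟨y, hy, hyε⟩ := approx (min 1 (‖x - f x‖ / 2)) (by positivity) (min_le_left _ _)
  have h1 : ‖x - f x‖ ≤ ‖y - f y‖ := hmin (by simpa using hy)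
  have h2 := hyε.trans (min_le_right _ _)
  linarith

/-- A nonempty closed convex subset of a Hilbert space is a retract of the space. -/
theorem Convex.exists_continuous_retraction {E : Type*} [NormedAddCommGroup E]
    [InnerProductSpace ℝ E] [CompleteSpace E] {K : Set E} (hK : Convex ℝ K) (hne : K.Nonempty)
    (hcl : IsClosed K) :
    ∃ p : E → E, Continuous p ∧ (∀ x, p x ∈ K) ∧ ∀ x ∈ K, p x = x := by
  choose p hpK hp using exists_norm_eq_iInf_of_complete_convex hne hcl.isComplete hK
  have hinner : ∀ u, ∀ w ∈ K, inner ℝ (u - p u) (w - p u) ≤ 0 := fun u =>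
    (norm_eq_iInf_iff_real_inner_le_zero hK (hpK u)).1 (hp u)
  refine ⟨p, ?_, hpK, ?_⟩
  · refine (LipschitzWith.of_dist_le_mul (K := 1) fun x y => ?_).continuous
    rw [dist_eq_norm, dist_eq_norm, NNReal.coe_one, one_mul]
    have h1 := hinner x (p y) (hpK y)
    have h2 := hinner y (p x) (hpK x)
    have h3 : ‖p x - p y‖ ^ 2 ≤ inner ℝ (x - y) (p x - p y) := by
      rw [← real_inner_self_eq_norm_sq]
      simp only [inner_sub_left, inner_sub_right] at h1 h2 ⊢
      linarith [real_inner_comm (p x) (p y)]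
    have h4 := real_inner_le_norm (x - y) (p x - p y)
    by_contra! hlt
    nlinarith [norm_nonneg (x - y)]
  · intro x hx
    have h1 := hinner x x hx
    rw [real_inner_self_nonpos, sub_eq_zero] at h1
    exact h1.symm

/-- **Brouwer's fixed point theorem** for compact convex subsets of finite-dimensional spaces. -/
theorem IsCompact.exists_isFixedPt_of_convex {V : Type*} [NormedAddCommGroup V]
    [NormedSpace ℝ V] [FiniteDimensional ℝ V] {K : Set V} (hKc : IsCompact K)
    (hK : Convex ℝ K) (hne : K.Nonempty) {f : V → V} (hf : ContinuousOn f K)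
    (hfK : Set.MapsTo f K K) : ∃ x ∈ K, f x = x := by
  let e : V ≃L[ℝ] EuclideanSpace ℝ (Fin (Module.finrank ℝ V)) := toEuclidean
  have hKc' : IsCompact (e '' K) := hKc.image e.continuous
  obtain ⟨p, hp, hpK, hpid⟩ := Convex.exists_continuous_retraction
    (K := e '' K)
    (hK.linear_image (e : V →ₗ[ℝ] EuclideanSpace ℝ (Fin (Module.finrank ℝ V))))
    (hne.image e) hKc'.isClosed
  have hmem : ∀ y, e.symm (p y) ∈ K := by
    intro y
    obtain ⟨x, hx, hxy⟩ := hpK y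
    have : e.symm (p y) = x := by rw [← hxy]; exact e.symm_apply_apply x
    rwa [this]
  have hcont : Continuous fun y => e (f (e.symm (p y))) :=
    e.continuous.comp (hf.comp_continuous (e.symm.continuous.comp hp) hmem)
  obtain ⟨R, hR⟩ := hKc'.isBounded.exists_norm_le
  obtain ⟨y, hy⟩ := exists_isFixedPt_of_bounded hcont (R := R)
    fun y => hR _ ⟨_, hfK (hmem y), rfl⟩
  have hyK : y ∈ e '' K := ⟨_, hfK (hmem y), hy⟩
  have hpy : p y = y := hpid y hyK
  rw [hpy] at hy
  refine ⟨e.symm y, hpy ▸ hmem y, ?_⟩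
  rw [← e.symm_apply_apply (f (e.symm y)), hy]

/-- The feasible set `{z ∈ S | ∀ k, H k p z ≤ 0}` at the parameter `p`. -/
def feasibleSet {κ P Z : Type*} (S : Set Z) (H : κ → P → Z → ℝ) (p : P) : Set Z :=
  {z | z ∈ S ∧ ∀ k, H k p z ≤ 0}

open Filter Topology in
/-- Limits of constrained maximizers are constrained maximizers, provided that Slater's condition
holds at the limiting parameter. -/
theorem isMaxOn_feasibleSet_of_tendsto {κ P Z ι : Type*} [Finite κ] [TopologicalSpace P]
    [NormedAddCommGroup Z] [NormedSpace ℝ Z] {S : Set Z} (hS : IsClosed S)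
    (hSc : Convex ℝ S) {H : κ → P → Z → ℝ} (hH : ∀ k, Continuous (Function.uncurry (H k)))
    {U : P → Z → ℝ} (hU : Continuous (Function.uncurry U)) {p : P} (hconv : ∀ k, ConvexOn ℝ S (H k p))
    {z₀ : Z} (hz₀ : z₀ ∈ S) (hslater : ∀ k, H k p z₀ < 0) {l : Filter ι} [l.NeBot]
    {q : ι → P} {b : ι → Z} {c : Z} (hq : Tendsto q l (𝓝 p)) (hb : Tendsto b l (𝓝 c))
    (hmem : ∀ᶠ m in l, b m ∈ feasibleSet S H (q m))
    (hmax : ∀ᶠ m in l, IsMaxOn (U (q m)) (feasibleSet S H (q m)) (b m)) :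
    c ∈ feasibleSet S H p ∧ IsMaxOn (U p) (feasibleSet S H p) c := by
  have hlim : ∀ {W : P → Z → ℝ}, Continuous (Function.uncurry W) →
      Tendsto (fun m => W (q m) (b m)) l (𝓝 (W p c)) := fun hW =>
    (hW.tendsto (p, c)).comp (hq.prodMk_nhds hb)
  have hlim' : ∀ {W : P → Z → ℝ} (z : Z), Continuous (Function.uncurry W) →
      Tendsto (fun m => W (q m) z) l (𝓝 (W p z)) := fun z hW =>
    (hW.tendsto (p, z)).comp (hq.prodMk_nhds tendsto_const_nhds)
  refine ⟨⟨hS.mem_of_tendsto hb (hmem.mono fun _ h => h.1), fun k =>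
    le_of_tendsto (hlim (hH k)) (hmem.mono fun _ h => h.2 k)⟩, ?_⟩
  rintro z ⟨hzS, hz⟩
  let y : ℝ → Z := fun t => (1 - t) • z + t • z₀
  have hy : Continuous y := by fun_prop
  have hyU : Tendsto (fun t => U p (y t)) (𝓝[>] 0) (𝓝 (U p z)) := by
    have h1 : Continuous fun t => U p (y t) := hU.comp (continuous_const.prodMk hy)
    have h2 := h1.tendsto 0
    simp only [y, sub_zero, one_smul, zero_smul, add_zero] at h2
    exact h2.mono_left nhdsWithin_le_nhds
  refine le_of_tendsto hyU ?_
  filter_upwards [Ioc_mem_nhdsGT (zero_lt_one' ℝ)] with t ht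
  have ht1 : 0 ≤ 1 - t := sub_nonneg.2 ht.2
  have hyS : y t ∈ S := hSc hzS hz₀ ht1 ht.1.le (by ring)
  have hneg : ∀ k, H k p (y t) < 0 := fun k => by
    have h1 := (hconv k).2 hzS hz₀ ht1 ht.1.le (by ring)
    simp only [smul_eq_mul] at h1
    nlinarith [mul_neg_of_pos_of_neg ht.1 (hslater k), mul_nonpos_of_nonneg_of_nonpos ht1 (hz k)]
  have hev : ∀ᶠ m in l, ∀ k, H k (q m) (y t) < 0 :=
    eventually_all.2 fun k => (hlim' _ (hH k)).eventually_lt_const (hneg k)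
  refine le_of_tendsto_of_tendsto (hlim' _ hU) (hlim hU) ?_
  filter_upwards [hev, hmax] with m h1 h2
  exact h2 ⟨hyS, fun k => (h1 k).le⟩

open Filter Topology in
/-- A selection of unique constrained maximizers is continuous under Slater's condition. -/
theorem continuousOn_of_isMaxOn_feasibleSet {κ P Z : Type*} [Finite κ] [TopologicalSpace P]
    [NormedAddCommGroup Z] [NormedSpace ℝ Z] {S : Set Z} (hS : IsCompact S) (hSc : Convex ℝ S)
    {H : κ → P → Z → ℝ} (hH : ∀ k, Continuous (Function.uncurry (H k))) {U : P → Z → ℝ}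
    (hU : Continuous (Function.uncurry U)) (hconv : ∀ k p, ConvexOn ℝ S (H k p))
    {z₀ : Z} (hz₀ : z₀ ∈ S) {D : Set P} (hslater : ∀ p ∈ D, ∀ k, H k p z₀ < 0) {b : P → Z}
    (hmem : ∀ p ∈ D, b p ∈ feasibleSet S H p)
    (hmax : ∀ p ∈ D, IsMaxOn (U p) (feasibleSet S H p) (b p))
    (huniq : ∀ p ∈ D, ∀ c ∈ feasibleSet S H p, IsMaxOn (U p) (feasibleSet S H p) c → c = b p) :
    ContinuousOn b D := by
  intro p hp
  refine hS.tendsto_nhds_of_unique_mapClusterPt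
    (eventually_mem_nhdsWithin.mono fun q hq => (hmem q hq).1) fun c _ hcl => ?_
  obtain ⟨F, hF, hFc⟩ := mapClusterPt_iff_ultrafilter.1 hcl
  have hD : ∀ᶠ q in (F : Filter P), q ∈ D := hF eventually_mem_nhdsWithin
  obtain ⟨h1, h2⟩ := isMaxOn_feasibleSet_of_tendsto hS.isClosed hSc hH hU (fun k => hconv k p) hz₀
    (hslater p hp) (q := id) (hF.trans nhdsWithin_le_nhds) hFc
    (hD.mono hmem) (hD.mono hmax)
  exact huniq p hp c h1 h2

/-- A concave function penalized by a positive multiple of the squared norm has at most one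
maximizer on a convex set. -/
theorem ConcaveOn.eq_of_isMaxOn_sub_norm_sq {Z : Type*} [NormedAddCommGroup Z]
    [InnerProductSpace ℝ Z] {T : Set Z} {u : Z → ℝ} (hu : ConcaveOn ℝ T u) {ε : ℝ} (hε : 0 < ε)
    {a b : Z} (ha : a ∈ T) (hb : b ∈ T) (hamax : IsMaxOn (fun z => u z - ε * ‖z‖ ^ 2) T a)
    (hbmax : IsMaxOn (fun z => u z - ε * ‖z‖ ^ 2) T b) : a = b := by
  have h2 : (0 : ℝ) ≤ 1 / 2 := by norm_num
  have hm := hu.1 ha hb h2 h2 (by norm_num)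
  have h3 := hu.2 ha hb h2 h2 (by norm_num)
  have h4 := hamax hm
  have h5 := hbmax hm
  have h6 : ‖(1 / 2 : ℝ) • a + (1 / 2 : ℝ) • b‖ ^ 2
      = (‖a‖ ^ 2 + ‖b‖ ^ 2) / 2 - ‖a - b‖ ^ 2 / 4 := by
    rw [← smul_add, norm_smul, mul_pow, norm_add_sq_real, norm_sub_sq_real]
    norm_num
    ring
  simp only [Set.mem_ofPred_eq, smul_eq_mul] at h3 h4 h5
  rw [h6] at h4 h5
  have h7 : ε * ‖a - b‖ ^ 2 ≤ 0 := by nlinarith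
  have h8 : ‖a - b‖ ^ 2 ≤ 0 := nonpos_of_mul_nonpos_right h7 hε
  have h9 : ‖a - b‖ = 0 := pow_eq_zero_iff two_ne_zero |>.1 (le_antisymm h8 (sq_nonneg _))
  exact sub_eq_zero.1 (norm_eq_zero.1 h9)

theorem isClosed_feasibleSet {κ P Z : Type*} [TopologicalSpace Z] {S : Set Z} (hS : IsClosed S)
    {H : κ → P → Z → ℝ} {p : P} (hH : ∀ k, Continuous (H k p)) :
    IsClosed (feasibleSet S H p) := by
  have : feasibleSet S H p = S ∩ ⋂ k, {z | H k p z ≤ 0} := by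
    ext
    simp [feasibleSet]
  rw [this]
  exact hS.inter (isClosed_iInter fun k => isClosed_le (hH k) continuous_const)

theorem convex_feasibleSet {κ P Z : Type*} [AddCommGroup Z] [Module ℝ Z] {S : Set Z}
    (hS : Convex ℝ S) {H : κ → P → Z → ℝ} {p : P} (hH : ∀ k, ConvexOn ℝ S (H k p)) :
    Convex ℝ (feasibleSet S H p) := by
  have : feasibleSet S H p = S ∩ ⋂ k, {z | z ∈ S ∧ H k p z ≤ 0} := by
    ext
    simp +contextual [feasibleSet]
  rw [this]
  exact hS.inter (convex_iInter fun k => (hH k).convex_le 0)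

/-- Existence of equilibria in concave games with externality constraints: `n` players,
player `i` with compact convex nonempty action set `S i ⊆ ℝ^{m i}`, utility `v i`
continuous in the profile and concave in own action, constraints `h i k ≤ 0` with each
`h i k` continuous in the profile and convex in own action, and a Slater-type default
action `x0 i ∈ S i` strictly satisfying all of player `i`'s constraints against every
profile of others' actions. Then an equilibrium exists. -/
theorem stmt_16 (n : ℕ) (mdim : Fin n → ℕ) (d : Fin n → ℕ)
    (S : ∀ i : Fin n, Set (EuclideanSpace ℝ (Fin (mdim i))))
    (hSne : ∀ i, (S i).Nonempty) (hScomp : ∀ i, IsCompact (S i))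
    (hSconv : ∀ i, Convex ℝ (S i))
    (v : ∀ i : Fin n, (∀ j : Fin n, EuclideanSpace ℝ (Fin (mdim j))) → ℝ)
    (hvcont : ∀ i, Continuous (v i))
    (hvconc : ∀ i (x : ∀ j, EuclideanSpace ℝ (Fin (mdim j))),
      ConcaveOn ℝ (S i) (fun z => v i (Function.update x i z)))
    (h : ∀ i : Fin n, Fin (d i) → (∀ j : Fin n, EuclideanSpace ℝ (Fin (mdim j))) → ℝ)
    (hhcont : ∀ i k, Continuous (h i k))
    (hhconv : ∀ i k (x : ∀ j, EuclideanSpace ℝ (Fin (mdim j))),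
      ConvexOn ℝ (S i) (fun z => h i k (Function.update x i z)))
    (x0 : ∀ i : Fin n, EuclideanSpace ℝ (Fin (mdim i)))
    (hx0 : ∀ i, x0 i ∈ S i)
    (hslater : ∀ i k (x : ∀ j, EuclideanSpace ℝ (Fin (mdim j))),
      (∀ j, x j ∈ S j) → h i k (Function.update x i (x0 i)) < 0) :
    ∃ xstar : ∀ j : Fin n, EuclideanSpace ℝ (Fin (mdim j)),
      (∀ i, xstar i ∈ S i) ∧
      ∀ i, (∀ k, h i k xstar ≤ 0) ∧
        ∀ z ∈ S i, (∀ k, h i k (Function.update xstar i z) ≤ 0) →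
          v i (Function.update xstar i z) ≤ v i xstar := by
  have hupd : ∀ i, Continuous fun w : (∀ j, EuclideanSpace ℝ (Fin (mdim j))) ×
      EuclideanSpace ℝ (Fin (mdim i)) => Function.update w.1 i w.2 := fun i =>
    continuous_fst.update i continuous_snd
  let K : Set (∀ j, EuclideanSpace ℝ (Fin (mdim j))) := Set.univ.pi S
  have hKS : ∀ x ∈ K, ∀ i, x i ∈ S i := fun x hx i => hx i (Set.mem_univ i)
  have hKc : IsCompact K := isCompact_univ_pi hScomp
  have hKconv : Convex ℝ K := convex_pi fun i _ => hSconv i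
  have hKne : K.Nonempty := ⟨x0, fun i _ => hx0 i⟩
  let H : ∀ i, Fin (d i) → (∀ j, EuclideanSpace ℝ (Fin (mdim j))) →
      EuclideanSpace ℝ (Fin (mdim i)) → ℝ := fun i k x z => h i k (Function.update x i z)
  let U : ℝ → ∀ i, (∀ j, EuclideanSpace ℝ (Fin (mdim j))) →
      EuclideanSpace ℝ (Fin (mdim i)) → ℝ :=
    fun ε i x z => v i (Function.update x i z) - ε * ‖z‖ ^ 2
  have hH : ∀ i k, Continuous (Function.uncurry (H i k)) := fun i k => (hhcont i k).comp (hupd i)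
  have hU : ∀ i, Continuous (fun w : (ℝ × ∀ j, EuclideanSpace ℝ (Fin (mdim j))) ×
      EuclideanSpace ℝ (Fin (mdim i)) => U w.1.1 i w.1.2 w.2) := fun i =>
    ((hvcont i).comp ((hupd i).comp (continuous_fst.snd.prodMk continuous_snd))).sub
      (by fun_prop)
  have hU' : ∀ ε i, Continuous (Function.uncurry (U ε i)) := fun ε i =>
    (hU i).comp ((continuous_const.prodMk continuous_fst).prodMk continuous_snd)
  have regularized : ∀ ε : ℝ, 0 < ε → ∃ x ∈ K, ∀ i, x i ∈ feasibleSet (S i) (H i) x ∧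
      IsMaxOn (U ε i x) (feasibleSet (S i) (H i) x) (x i) := by
    intro ε hε
    have hex : ∀ i x, ∃ z, x ∈ K → z ∈ feasibleSet (S i) (H i) x ∧
        IsMaxOn (U ε i x) (feasibleSet (S i) (H i) x) z := by
      intro i x
      by_cases hx : x ∈ K
      · have hcl : IsClosed (feasibleSet (S i) (H i) x) :=
          isClosed_feasibleSet (hScomp i).isClosed fun k => (hH i k).uncurry_left x
        obtain ⟨z, hz, hzmax⟩ := ((hScomp i).of_isClosed_subset hcl fun z hz => hz.1).exists_isMaxOn
          ⟨x0 i, hx0 i, fun k => (hslater i k x (hKS x hx)).le⟩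
          ((hU' ε i).uncurry_left x).continuousOn
        exact ⟨z, fun _ => ⟨hz, hzmax⟩⟩
      · exact ⟨x0 i, fun h => absurd h hx⟩
    choose b hb using hex
    have hbc : ContinuousOn (fun x i => b i x) K := by
      refine continuousOn_pi.2 fun i => ?_
      refine continuousOn_of_isMaxOn_feasibleSet (hScomp i) (hSconv i) (hH i) (hU' ε i)
        (hhconv i) (hx0 i) (fun x hx k => hslater i k x (hKS x hx)) (fun x hx => (hb i x hx).1)
        (fun x hx => (hb i x hx).2) fun x hx c hc hcmax => ?_
      have hconc : ConcaveOn ℝ (feasibleSet (S i) (H i) x)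
          (fun z => v i (Function.update x i z)) :=
        (hvconc i x).subset (fun z hz => hz.1)
          (convex_feasibleSet (hSconv i) fun k => hhconv i k x)
      exact hconc.eq_of_isMaxOn_sub_norm_sq hε hc (hb i x hx).1 hcmax (hb i x hx).2
    obtain ⟨x, hx, hfix⟩ := hKc.exists_isFixedPt_of_convex hKconv hKne hbc
      fun x hx i _ => (hb i x hx).1.1
    refine ⟨x, hx, fun i => ?_⟩
    have := hb i x hx
    rwa [congrFun hfix i] at this
  choose! y hyK hy using regularized
  let F : Ultrafilter ℝ := Ultrafilter.of (nhdsWithin 0 (Set.Ioi 0))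
  have hF : (F : Filter ℝ) ≤ nhdsWithin 0 (Set.Ioi 0) := Ultrafilter.of_le _
  have hF0 : Filter.Tendsto (fun ε : ℝ => ε) F (nhds 0) := hF.trans nhdsWithin_le_nhds
  have hpos : ∀ᶠ ε in (F : Filter ℝ), 0 < ε := hF eventually_mem_nhdsWithin
  obtain ⟨x, hxK, hx⟩ := hKc.ultrafilter_le_nhds' (F.map y) (hpos.mono hyK)
  have hlim : Filter.Tendsto y F (nhds x) := hx
  have hopt : ∀ i, x i ∈ feasibleSet (S i) (H i) x ∧
      IsMaxOn (U 0 i x) (feasibleSet (S i) (H i) x) (x i) := by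
    intro i
    let H' : Fin (d i) → (ℝ × ∀ j, EuclideanSpace ℝ (Fin (mdim j))) →
        EuclideanSpace ℝ (Fin (mdim i)) → ℝ := fun k w => H i k w.2
    let U' : (ℝ × ∀ j, EuclideanSpace ℝ (Fin (mdim j))) →
        EuclideanSpace ℝ (Fin (mdim i)) → ℝ := fun w => U w.1 i w.2
    have hH' : ∀ k, Continuous (Function.uncurry (H' k)) := fun k =>
      (hH i k).comp (continuous_fst.snd.prodMk continuous_snd)
    have hmem : ∀ᶠ ε in (F : Filter ℝ), y ε i ∈ feasibleSet (S i) H' (ε, y ε) :=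
      hpos.mono fun ε hε => (hy ε hε i).1
    have hmax : ∀ᶠ ε in (F : Filter ℝ),
        IsMaxOn (U' (ε, y ε)) (feasibleSet (S i) H' (ε, y ε)) (y ε i) :=
      hpos.mono fun ε hε => (hy ε hε i).2
    exact isMaxOn_feasibleSet_of_tendsto (U := U') (p := ((0 : ℝ), x)) (hScomp i).isClosed
      (hSconv i) hH'
      (hU i) (fun k => hhconv i k x) (hx0 i) (fun k => hslater i k x (hKS x hxK))
      (hF0.prodMk_nhds hlim) (((continuous_apply i).tendsto x).comp hlim) hmem hmax
  refine ⟨x, hKS x hxK, fun i => ⟨fun k => ?_, fun z hz hzH => ?_⟩⟩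
  · simpa [H] using (hopt i).1.2 k
  · simpa [U] using (hopt i).2 ⟨hz, hzH⟩
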